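/- Let V ∈ L^∞(ℝ) be a non-decreasing function with 0 < v₀ := ess inf_{x∈ℝ} V(x) < v₁ := ess sup_{x∈ℝ} V(x). Then a ↦ F(a;V) is a strictly increasing function on ℝ, and the infimum m(V) is not attained, i.e., there is no u ∈ H¹(ℝ)∖{0} with I(u;V)/‖u‖_∞² = m(V). -/

import Mathlib

open MeasureTheory Filter Real Topology

/-- The supremum norm `‖u‖_∞` of a (bounded continuous) function `u : ℝ → ℝ`. -/
noncomputable def supNorm (u : ℝ → ℝ) : ℝ := ⨆ x : ℝ, |u x|

/-- `u` is (the continuous representative of) an element of `H¹(ℝ)`: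
`u` is continuous, `u ∈ L²(ℝ)`, and there is a weak derivative `u' ∈ L²(ℝ)`,
i.e. `u x = u 0 + ∫_0^x u'`. -/
def IsH1 (u : ℝ → ℝ) : Prop :=
  Continuous u ∧ MemLp u 2 (volume : Measure ℝ) ∧
    ∃ u' : ℝ → ℝ, MemLp u' 2 (volume : Measure ℝ) ∧
      ∀ x : ℝ, u x = u 0 + ∫ t in (0:ℝ)..x, u' t

/-- The Dirichlet energy `∫_ℝ |u'(x)|² dx`.  (For `u ∈ H¹(ℝ)` the classical
derivative `deriv u` exists a.e. and coincides a.e. with the weak derivative.) -/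
noncomputable def energy (u : ℝ → ℝ) : ℝ := ∫ x : ℝ, (deriv u x) ^ 2

/-- `I(u;V) = ∫_ℝ (|u'(x)|² + V(x)|u(x)|²) dx` for a potential `V : ℝ → ℝ`. -/
noncomputable def IV (V : ℝ → ℝ) (u : ℝ → ℝ) : ℝ :=
  ∫ x : ℝ, ((deriv u x) ^ 2 + V x * (u x) ^ 2)

/-- Membership in `K_a = { u ∈ H¹(ℝ) ; u(a) = ‖u‖_∞ = 1 }`. -/
def InKa (a : ℝ) (u : ℝ → ℝ) : Prop := IsH1 u ∧ u a = 1 ∧ supNorm u = 1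

/-- `F(a;V) = inf { I(u;V) ; u ∈ K_a }`. -/
noncomputable def FV (V : ℝ → ℝ) (a : ℝ) : ℝ :=
  sInf {r : ℝ | ∃ u : ℝ → ℝ, InKa a u ∧ r = IV V u}

/-- `m(V) = inf { I(u;V)/‖u‖_∞² ; u ∈ H¹(ℝ), u ≢ 0 }`. -/
noncomputable def mV (V : ℝ → ℝ) : ℝ :=
  sInf {r : ℝ | ∃ u : ℝ → ℝ, IsH1 u ∧ u ≠ 0 ∧ r = IV V u / (supNorm u) ^ 2}

/-! Choose `k > 0` with `V ≤ k²`. The function `e(x) = e^{-k|x - b|}` solves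
`-e'' + k² e = 2k δ_b`, so away from `b` it is a subsolution of `-u'' + V u = 0`. Replacing
`u ∈ K_b` by `w = max u e` therefore does not increase the energy, while it gives the uniform lower
bound `w ≥ e`. Translating `w` by `h > 0` turns it into a competitor for `F(b - h; V)` and lowers
the energy by `∫ (V(x) - V(x - h)) w(x)² dx ≥ ∫ (V(x) - V(x - h)) e(x)² dx`. The last integral does
not depend on `u` and is positive, since a monotone function which is invariant under a translation
is constant.

Every nonzero `u ∈ H¹(ℝ)` attains `‖u‖_∞` at some `a`, whence `F(a; V) ≤ I(u; V) / ‖u‖_∞²`; on the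
other hand `m(V) ≤ F(a - 1; V) < F(a; V)`. -/

/-- Absolute continuity on every compact interval; in one dimension this is membership in
`W^{1,1}_loc(ℝ)`, with the weak derivative given by the almost everywhere defined `deriv u`. -/
def LocallyAbsolutelyContinuous (u : ℝ → ℝ) : Prop :=
  ∀ a b : ℝ, AbsolutelyContinuousOnInterval u a b

namespace LocallyAbsolutelyContinuous

variable {u v : ℝ → ℝ}

lemma continuous (hu : LocallyAbsolutelyContinuous u) : Continuous u :=
  continuous_iff_continuousAt.2 fun x =>
    (hu (x - 1) (x + 1)).continuousOn.continuousAt <| by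
      rw [Set.uIcc_of_le (by linarith)]
      exact Icc_mem_nhds (by linarith) (by linarith)

lemma ae_differentiableAt (hu : LocallyAbsolutelyContinuous u) :
    ∀ᵐ x, DifferentiableAt ℝ u x := by
  have hall : ∀ᵐ x, ∀ n : ℕ, x ∈ Set.uIcc (-(n : ℝ)) n → DifferentiableAt ℝ u x :=
    ae_all_iff.2 fun n => (hu _ _).ae_differentiableAt
  filter_upwards [hall] with x hx
  obtain ⟨n, hn⟩ := exists_nat_ge |x|
  exact hx n (Set.Icc_subset_uIcc (abs_le.1 hn))

lemma sub (hu : LocallyAbsolutelyContinuous u) (hv : LocallyAbsolutelyContinuous v) :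
    LocallyAbsolutelyContinuous fun x => u x - v x :=
  fun a b => (hu a b).fun_sub (hv a b)

lemma mul (hu : LocallyAbsolutelyContinuous u) (hv : LocallyAbsolutelyContinuous v) :
    LocallyAbsolutelyContinuous fun x => u x * v x :=
  fun a b => (hu a b).fun_mul (hv a b)

lemma max (hu : LocallyAbsolutelyContinuous u) (hv : LocallyAbsolutelyContinuous v) :
    LocallyAbsolutelyContinuous fun x => max (u x) (v x) := by
  intro a b
  refine squeeze_zero (fun t => Finset.sum_nonneg fun i _ => dist_nonneg) (fun t => ?_)
    (by simpa only [add_zero] using Tendsto.add (hu a b) (hv a b))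
  rw [← Finset.sum_add_distrib]
  gcongr with i
  exact (abs_max_sub_max_le_max _ _ _ _).trans
    (max_le_add_of_nonneg (abs_nonneg _) (abs_nonneg _))

lemma ae_deriv_mul (hu : LocallyAbsolutelyContinuous u) (hv : LocallyAbsolutelyContinuous v) :
    deriv (fun x => u x * v x) =ᵐ[volume] fun x => deriv u x * v x + u x * deriv v x := by
  filter_upwards [hu.ae_differentiableAt, hv.ae_differentiableAt] with x hux hvx
  exact deriv_fun_mul hux hvx

lemma integral_Ioi_deriv_of_tendsto (hu : LocallyAbsolutelyContinuous u) {b l : ℝ}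
    (hint : IntegrableOn (deriv u) (Set.Ioi b)) (hl : Tendsto u atTop (𝓝 l)) :
    ∫ x in Set.Ioi b, deriv u x = l - u b := by
  refine tendsto_nhds_unique (intervalIntegral_tendsto_integral_Ioi b hint tendsto_id) ?_
  simp only [id, (hu b _).integral_deriv_eq_sub]
  exact hl.sub_const _

lemma integral_Iic_deriv_of_tendsto (hu : LocallyAbsolutelyContinuous u) {b l : ℝ}
    (hint : IntegrableOn (deriv u) (Set.Iic b)) (hl : Tendsto u atBot (𝓝 l)) :
    ∫ x in Set.Iic b, deriv u x = u b - l := by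
  refine tendsto_nhds_unique (intervalIntegral_tendsto_integral_Iic b hint tendsto_id) ?_
  simp only [id, (hu _ b).integral_deriv_eq_sub]
  exact hl.const_sub _

lemma tendsto_atTop_zero (hu : LocallyAbsolutelyContinuous u) (hint : Integrable u)
    (hderiv : Integrable (deriv u)) : Tendsto u atTop (𝓝 0) := by
  have hlim : Tendsto u atTop (𝓝 (u 0 + ∫ t in Set.Ioi (0 : ℝ), deriv u t)) := by
    refine ((intervalIntegral_tendsto_integral_Ioi 0 hderiv.integrableOn tendsto_id).const_add
      (u 0)).congr fun x => ?_
    rw [id, (hu 0 x).integral_deriv_eq_sub, add_sub_cancel]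
  convert hlim
  refine ((hint.integrableAtFilter atTop).eq_zero_of_tendsto (fun s hs => ?_) hlim).symm
  obtain ⟨b, hb⟩ := mem_atTop_sets.1 hs
  exact measure_mono_top hb Real.volume_Ici

lemma tendsto_atBot_zero (hu : LocallyAbsolutelyContinuous u) (hint : Integrable u)
    (hderiv : Integrable (deriv u)) : Tendsto u atBot (𝓝 0) := by
  have hlim : Tendsto u atBot (𝓝 (u 0 - ∫ t in Set.Iic (0 : ℝ), deriv u t)) := by
    refine ((intervalIntegral_tendsto_integral_Iic 0 hderiv.integrableOn tendsto_id).const_sub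
      (u 0)).congr fun x => ?_
    rw [id, (hu x 0).integral_deriv_eq_sub, sub_sub_cancel]
  convert hlim
  refine ((hint.integrableAtFilter atBot).eq_zero_of_tendsto (fun s hs => ?_) hlim).symm
  obtain ⟨b, hb⟩ := mem_atBot_sets.1 hs
  exact measure_mono_top hb Real.volume_Iic

end LocallyAbsolutelyContinuous

lemma deriv_eq_of_eventually_le_of_eq {u w : ℝ → ℝ} {x : ℝ} (hu : DifferentiableAt ℝ u x)
    (hw : DifferentiableAt ℝ w x) (hle : ∀ᶠ y in 𝓝 x, u y ≤ w y) (heq : w x = u x) :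
    deriv w x = deriv u x := by
  have hmin : IsLocalMin (fun y => w y - u y) x := by
    filter_upwards [hle] with y hy
    rw [heq, sub_self]
    exact sub_nonneg.2 hy
  exact sub_eq_zero.1 (hmin.hasDerivAt_eq_zero (hw.hasDerivAt.sub hu.hasDerivAt))

lemma isH1_iff {u : ℝ → ℝ} :
    IsH1 u ↔ LocallyAbsolutelyContinuous u ∧ MemLp u 2 volume ∧ MemLp (deriv u) 2 volume := by
  refine ⟨fun ⟨_, hu, u', hu', hint⟩ => ?_, fun ⟨hac, hu, hu'⟩ =>
    ⟨hac.continuous, hu, deriv u, hu', fun x => ?_⟩⟩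
  · have hprim : u = fun x => u 0 + ∫ t in (0 : ℝ)..x, u' t := funext hint
    have hloc : LocallyIntegrable u' volume := hu'.locallyIntegrable one_le_two
    have hderiv : u' =ᵐ[volume] deriv u := by
      filter_upwards [LocallyIntegrable.ae_hasDerivAt_integral hloc] with x hx
      rw [hprim]
      exact ((hx 0).const_add (u 0)).deriv.symm
    refine ⟨fun a b => ?_, hu, hu'.ae_eq hderiv⟩
    have hii (c d : ℝ) : IntervalIntegrable u' volume c d :=
      (hloc.integrableOn_isCompact isCompact_uIcc).intervalIntegrable
    have hfrom_a : u = fun x => u a + ∫ t in a..x, u' t := by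
      ext x
      rw [hint x, hint a, add_assoc,
        intervalIntegral.integral_add_adjacent_intervals (hii 0 a) (hii a x)]
    rw [hfrom_a]
    exact (LipschitzWith.const (u a)).lipschitzOnWith.absolutelyContinuousOnInterval.fun_add
      ((hii a b).absolutelyContinuousOnInterval_intervalIntegral Set.left_mem_uIcc)
  · rw [(hac 0 x).integral_deriv_eq_sub, add_sub_cancel]

namespace IsH1

variable {u v : ℝ → ℝ}

lemma locallyAbsolutelyContinuous (hu : IsH1 u) : LocallyAbsolutelyContinuous u :=
  (isH1_iff.1 hu).1

lemma memLp (hu : IsH1 u) : MemLp u 2 volume :=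
  hu.2.1

lemma memLp_deriv (hu : IsH1 u) : MemLp (deriv u) 2 volume :=
  (isH1_iff.1 hu).2.2

lemma ae_differentiableAt (hu : IsH1 u) : ∀ᵐ x, DifferentiableAt ℝ u x :=
  hu.locallyAbsolutelyContinuous.ae_differentiableAt

lemma const_mul (c : ℝ) (hu : IsH1 u) : IsH1 fun x => c * u x := by
  obtain ⟨hcont, hL2, u', hu', hint⟩ := hu
  refine ⟨hcont.const_mul c, hL2.const_mul c, fun x => c * u' x, hu'.const_mul c, fun x => ?_⟩
  beta_reduce
  rw [intervalIntegral.integral_const_mul, hint x, mul_add]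

lemma ae_deriv_sub (hu : IsH1 u) (hv : IsH1 v) :
    deriv (fun x => u x - v x) =ᵐ[volume] fun x => deriv u x - deriv v x := by
  filter_upwards [hu.ae_differentiableAt, hv.ae_differentiableAt] with x hux hvx
  exact deriv_fun_sub hux hvx

lemma sub (hu : IsH1 u) (hv : IsH1 v) : IsH1 fun x => u x - v x :=
  isH1_iff.2 ⟨hu.locallyAbsolutelyContinuous.sub hv.locallyAbsolutelyContinuous,
    hu.memLp.sub hv.memLp, (hu.memLp_deriv.sub hv.memLp_deriv).ae_eq (hu.ae_deriv_sub hv).symm⟩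

lemma comp_add_right (hu : IsH1 u) (h : ℝ) : IsH1 fun x => u (x + h) := by
  have hshift : MeasurePreserving (fun x : ℝ => x + h) volume volume :=
    measurePreserving_add_right volume h
  refine ⟨hu.1.comp (continuous_add_const h), hu.memLp.comp_measurePreserving hshift,
    fun x => deriv u (x + h), hu.memLp_deriv.comp_measurePreserving hshift, fun x => ?_⟩
  rw [intervalIntegral.integral_comp_add_right,
    (hu.locallyAbsolutelyContinuous _ _).integral_deriv_eq_sub, add_sub_cancel]

lemma ae_deriv_max (hu : IsH1 u) (hv : IsH1 v) :
    ∀ᵐ x, (v x ≤ u x → deriv (fun y => max (u y) (v y)) x = deriv u x) ∧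
      (u x ≤ v x → deriv (fun y => max (u y) (v y)) x = deriv v x) := by
  have hmax := hu.locallyAbsolutelyContinuous.max hv.locallyAbsolutelyContinuous
  filter_upwards [hu.ae_differentiableAt, hv.ae_differentiableAt, hmax.ae_differentiableAt]
    with x hux hvx hmaxx
  exact ⟨fun h => deriv_eq_of_eventually_le_of_eq hux hmaxx
      (.of_forall fun _ => le_max_left _ _) (max_eq_left h),
    fun h => deriv_eq_of_eventually_le_of_eq hvx hmaxx
      (.of_forall fun _ => le_max_right _ _) (max_eq_right h)⟩

lemma max (hu : IsH1 u) (hv : IsH1 v) : IsH1 fun x => max (u x) (v x) := by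
  refine isH1_iff.2 ⟨hu.locallyAbsolutelyContinuous.max hv.locallyAbsolutelyContinuous,
    hu.memLp.sup hv.memLp, MemLp.mono' (hu.memLp_deriv.norm.add hv.memLp_deriv.norm)
      (measurable_deriv _).aestronglyMeasurable ?_⟩
  filter_upwards [hu.ae_deriv_max hv] with x hx
  rcases le_total (v x) (u x) with h | h
  · rw [hx.1 h]
    exact le_add_of_nonneg_right (norm_nonneg _)
  · rw [hx.2 h]
    exact le_add_of_nonneg_left (norm_nonneg _)

lemma integrable_deriv_mul (hu : IsH1 u) (hv : IsH1 v) :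
    Integrable (deriv fun x => u x * v x) :=
  ((hu.memLp_deriv.integrable_mul hv.memLp).add (hu.memLp.integrable_mul hv.memLp_deriv)).congr
    (hu.locallyAbsolutelyContinuous.ae_deriv_mul hv.locallyAbsolutelyContinuous).symm

lemma tendsto_mul_atTop (hu : IsH1 u) (hv : IsH1 v) :
    Tendsto (fun x => u x * v x) atTop (𝓝 0) :=
  (hu.locallyAbsolutelyContinuous.mul hv.locallyAbsolutelyContinuous).tendsto_atTop_zero
    (hu.memLp.integrable_mul hv.memLp) (hu.integrable_deriv_mul hv)

lemma tendsto_mul_atBot (hu : IsH1 u) (hv : IsH1 v) :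
    Tendsto (fun x => u x * v x) atBot (𝓝 0) :=
  (hu.locallyAbsolutelyContinuous.mul hv.locallyAbsolutelyContinuous).tendsto_atBot_zero
    (hu.memLp.integrable_mul hv.memLp) (hu.integrable_deriv_mul hv)

lemma integral_Ioi_deriv_mul (hu : IsH1 u) (hv : IsH1 v) (b : ℝ) :
    ∫ x in Set.Ioi b, deriv (fun x => u x * v x) x = -(u b * v b) := by
  rw [(hu.locallyAbsolutelyContinuous.mul
    hv.locallyAbsolutelyContinuous).integral_Ioi_deriv_of_tendsto
      (hu.integrable_deriv_mul hv).integrableOn (hu.tendsto_mul_atTop hv), zero_sub]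

lemma integral_Iic_deriv_mul (hu : IsH1 u) (hv : IsH1 v) (b : ℝ) :
    ∫ x in Set.Iic b, deriv (fun x => u x * v x) x = u b * v b := by
  rw [(hu.locallyAbsolutelyContinuous.mul
    hv.locallyAbsolutelyContinuous).integral_Iic_deriv_of_tendsto
      (hu.integrable_deriv_mul hv).integrableOn (hu.tendsto_mul_atBot hv), sub_zero]

lemma tendsto_abs_cocompact (hu : IsH1 u) : Tendsto (fun x => |u x|) (cocompact ℝ) (𝓝 0) := by
  have hsq : Tendsto (fun x => u x * u x) (cocompact ℝ) (𝓝 0) := by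
    rw [cocompact_eq_atBot_atTop]
    exact (hu.tendsto_mul_atBot hu).sup (hu.tendsto_mul_atTop hu)
  simpa only [Real.sqrt_mul_self_eq_abs, Real.sqrt_zero] using hsq.sqrt

lemma exists_forall_abs_le (hu : IsH1 u) : ∃ a, ∀ x, |u x| ≤ |u a| := by
  by_cases hzero : ∀ y, u y = 0
  · exact ⟨0, fun x => by simp only [hzero, le_refl]⟩
  · obtain ⟨y, hy⟩ := not_forall.1 hzero
    exact hu.1.abs.exists_forall_ge' y
      (hu.tendsto_abs_cocompact.eventually_le_const (abs_pos.2 hy))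

end IsH1

/-- The decaying exponential `x ↦ e^{-k|x - b|}`, the multiple of the Green's function of
`-d²/dx² + k²` with pole `b` that is normalised to take the value `1` at `b`. -/
noncomputable def expDecay (k b x : ℝ) : ℝ := Real.exp (-(k * |x - b|))

section ExpDecay

variable {k b : ℝ}

lemma expDecay_pos (k b x : ℝ) : 0 < expDecay k b x :=
  Real.exp_pos _

lemma expDecay_self (k b : ℝ) : expDecay k b b = 1 := by
  simp only [expDecay, sub_self, abs_zero, mul_zero, neg_zero, Real.exp_zero]

lemma expDecay_le_one (hk : 0 ≤ k) (b x : ℝ) : expDecay k b x ≤ 1 :=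
  Real.exp_le_one_iff.2 (neg_nonpos.2 (mul_nonneg hk (abs_nonneg _)))

lemma expDecay_sq (k b x : ℝ) : expDecay k b x ^ 2 = expDecay (2 * k) b x := by
  rw [expDecay, expDecay, ← Real.exp_nat_mul]
  push_cast
  ring_nf

lemma continuous_expDecay (k b : ℝ) : Continuous (expDecay k b) := by
  unfold expDecay
  fun_prop

lemma hasDerivAt_expDecay {x : ℝ} (hx : x ≠ b) :
    HasDerivAt (expDecay k b) (-(k * SignType.sign (x - b)) * expDecay k b x) x := by
  have habs : HasDerivAt (fun y => |y - b|) (SignType.sign (x - b) : ℝ) x :=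
    (hasDerivAt_abs (sub_ne_zero.2 hx)).comp_sub_const x b
  rw [mul_comm]
  exact (habs.const_mul k).neg.exp

lemma deriv_expDecay_of_lt {x : ℝ} (hx : x < b) :
    deriv (expDecay k b) x = k * expDecay k b x := by
  rw [(hasDerivAt_expDecay hx.ne).deriv, sign_neg (sub_neg.2 hx), SignType.coe_neg_one, mul_neg_one,
    neg_neg]

lemma deriv_expDecay_of_gt {x : ℝ} (hx : b < x) :
    deriv (expDecay k b) x = -k * expDecay k b x := by
  rw [(hasDerivAt_expDecay hx.ne').deriv, sign_pos (sub_pos.2 hx), SignType.coe_one, mul_one]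

lemma integrable_expDecay (hk : 0 < k) (b : ℝ) : Integrable (expDecay k b) := by
  have hcentred : Integrable fun x : ℝ => Real.exp (-(k * |x|)) := by
    rw [← integrableOn_univ, ← Set.Iic_union_Ioi (a := (0 : ℝ)), integrableOn_union]
    constructor
    · refine (integrableOn_exp_mul_Iic hk 0).congr_fun (fun x hx => ?_) measurableSet_Iic
      rw [abs_of_nonpos hx, mul_neg, neg_neg]
    · refine (integrableOn_exp_mul_Ioi (neg_lt_zero.2 hk) 0).congr_fun (fun x hx => ?_)
        measurableSet_Ioi
      simp only [neg_mul, abs_of_pos (Set.mem_Ioi.1 hx)]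
  exact hcentred.comp_sub_right b

lemma memLp_two_expDecay (hk : 0 < k) (b : ℝ) : MemLp (expDecay k b) 2 volume := by
  rw [memLp_two_iff_integrable_sq (continuous_expDecay k b).aestronglyMeasurable]
  simp only [expDecay_sq]
  exact integrable_expDecay (by positivity) b

lemma memLp_two_deriv_expDecay (hk : 0 < k) (b : ℝ) :
    MemLp (deriv (expDecay k b)) 2 volume := by
  refine (memLp_two_expDecay hk b).of_le_mul (c := k)
    (measurable_deriv _).aestronglyMeasurable ?_
  filter_upwards [Measure.ae_ne volume b] with x hx
  rcases lt_or_gt_of_ne hx with h | h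
  · rw [deriv_expDecay_of_lt h, norm_mul, Real.norm_of_nonneg hk.le]
  · rw [deriv_expDecay_of_gt h, norm_mul, norm_neg, Real.norm_of_nonneg hk.le]

lemma isH1_expDecay (hk : 0 < k) (b : ℝ) : IsH1 (expDecay k b) := by
  refine ⟨continuous_expDecay k b, memLp_two_expDecay hk b, deriv (expDecay k b),
    memLp_two_deriv_expDecay hk b, fun x => ?_⟩
  have hint : IntervalIntegrable (deriv (expDecay k b)) volume 0 x :=
    (((memLp_two_deriv_expDecay hk b).locallyIntegrable one_le_two).integrableOn_isCompact
      isCompact_uIcc).intervalIntegrable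
  rw [integral_eq_of_hasDerivAt_off_countable _ _ (Set.countable_singleton b)
    (continuous_expDecay k b).continuousOn
    (fun y hy => (hasDerivAt_expDecay hy.2).differentiableAt.hasDerivAt) hint, add_sub_cancel]

lemma integral_deriv_expDecay_mul_deriv_add (hk : 0 < k) (b : ℝ) {φ : ℝ → ℝ} (hφ : IsH1 φ) :
    ∫ x, (deriv (expDecay k b) x * deriv φ x + k ^ 2 * (expDecay k b x * φ x)) =
      2 * k * φ b := by
  have he := isH1_expDecay hk b
  have hderiv := he.locallyAbsolutelyContinuous.ae_deriv_mul hφ.locallyAbsolutelyContinuous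
  have hint : Integrable fun x =>
      deriv (expDecay k b) x * deriv φ x + k ^ 2 * (expDecay k b x * φ x) :=
    (he.memLp_deriv.integrable_mul hφ.memLp_deriv).add
      ((he.memLp.integrable_mul hφ.memLp).const_mul _)
  have hleft : ∫ x in Set.Iic b,
      (deriv (expDecay k b) x * deriv φ x + k ^ 2 * (expDecay k b x * φ x)) = k * φ b := by
    rw [← one_mul (φ b), ← expDecay_self k b, ← he.integral_Iic_deriv_mul hφ b,
      ← integral_const_mul]
    refine setIntegral_congr_ae measurableSet_Iic ?_
    filter_upwards [hderiv, Measure.ae_ne volume b] with x hx hxb hxle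
    rw [hx, deriv_expDecay_of_lt (lt_of_le_of_ne hxle hxb)]
    ring
  have hright : ∫ x in Set.Ioi b,
      (deriv (expDecay k b) x * deriv φ x + k ^ 2 * (expDecay k b x * φ x)) = k * φ b := by
    rw [← neg_mul_neg, ← one_mul (φ b), ← expDecay_self k b, ← he.integral_Ioi_deriv_mul hφ b,
      ← integral_const_mul]
    refine setIntegral_congr_ae measurableSet_Ioi ?_
    filter_upwards [hderiv] with x hx hxb
    rw [hx, deriv_expDecay_of_gt hxb]
    ring
  rw [← intervalIntegral.integral_Iic_add_Ioi hint.integrableOn hint.integrableOn, hleft, hright]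
  ring

end ExpDecay

section Energy

variable {V V₁ V₂ u v w : ℝ → ℝ}

lemma integrable_IV (hV : MemLp V ⊤ volume) (hu : IsH1 u) :
    Integrable fun x => deriv u x ^ 2 + V x * u x ^ 2 :=
  hu.memLp_deriv.integrable_sq.add (hu.memLp.integrable_sq.mul_of_top_right hV)

lemma IV_nonneg (hV : 0 ≤ᵐ[volume] V) (u : ℝ → ℝ) : 0 ≤ IV V u := by
  refine integral_nonneg_of_ae ?_
  filter_upwards [hV] with x hx
  exact add_nonneg (sq_nonneg _) (mul_nonneg hx (sq_nonneg _))

lemma IV_const_mul (V u : ℝ → ℝ) (c : ℝ) : IV V (fun x => c * u x) = c ^ 2 * IV V u := by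
  unfold IV
  rw [← integral_const_mul]
  refine integral_congr_ae (.of_forall fun x => ?_)
  beta_reduce
  rw [deriv_const_mul_field]
  ring

lemma IV_comp_add_right (V u : ℝ → ℝ) (h : ℝ) :
    IV V (fun x => u (x + h)) = IV (fun x => V (x - h)) u := by
  unfold IV
  rw [← integral_add_right_eq_self (fun x => deriv u x ^ 2 + V (x - h) * u x ^ 2) h]
  simp only [deriv_comp_add_const, add_sub_cancel_right]

lemma IV_add_integral_le (hV₁ : MemLp V₁ ⊤ volume) (hV₂ : MemLp V₂ ⊤ volume)
    (hle : V₁ ≤ᵐ[volume] V₂) (hw : IsH1 w) (hvw : ∀ x, |v x| ≤ |w x|) :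
    IV V₁ w + ∫ x, (V₂ x - V₁ x) * v x ^ 2 ≤ IV V₂ w := by
  have hint₁ := integrable_IV hV₁ hw
  have hint₂ := integrable_IV hV₂ hw
  rw [← le_sub_iff_add_le', IV, IV, ← integral_sub hint₂ hint₁]
  refine integral_mono_of_nonneg ?_ (hint₂.sub hint₁) ?_
  · filter_upwards [hle] with x hx
    exact mul_nonneg (sub_nonneg.2 hx) (sq_nonneg _)
  · filter_upwards [hle] with x hx
    calc (V₂ x - V₁ x) * v x ^ 2 ≤ (V₂ x - V₁ x) * w x ^ 2 :=
          mul_le_mul_of_nonneg_left (sq_le_sq.2 (hvw x)) (sub_nonneg.2 hx)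
      _ = deriv w x ^ 2 + V₂ x * w x ^ 2 - (deriv w x ^ 2 + V₁ x * w x ^ 2) := by ring

lemma IV_max_le_add_two_mul_integral {c : ℝ} (hV : MemLp V ⊤ volume) (h0 : 0 ≤ᵐ[volume] V)
    (hVc : ∀ᵐ x, V x ≤ c) (hu : IsH1 u) (hv : IsH1 v) (hv0 : ∀ x, 0 ≤ v x) :
    IV V (fun x => max (u x) (v x)) ≤ IV V u + 2 * ∫ x,
      (deriv v x * deriv (fun y => max (u y) (v y) - u y) x +
        c * (v x * (max (u x) (v x) - u x))) := by
  have hmax := hu.max hv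
  have hφ := hmax.sub hu
  have hint_max := integrable_IV hV hmax
  have hint_u := integrable_IV hV hu
  have hint := (hv.memLp_deriv.integrable_mul hφ.memLp_deriv).add
      ((hv.memLp.integrable_mul hφ.memLp).const_mul c)
  rw [← sub_le_iff_le_add', IV, IV, ← integral_sub hint_max hint_u, ← integral_const_mul]
  refine integral_mono_ae (hint_max.sub hint_u) (hint.const_mul 2) ?_
  filter_upwards [h0, hVc, hu.ae_deriv_max hv, hmax.ae_deriv_sub hu] with x h0x hcx hmaxx hφx
  rw [hφx]
  rcases le_total (v x) (u x) with h | h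
  · rw [hmaxx.1 h, max_eq_left h]
    simp only [sub_self, mul_zero, add_zero, le_refl]
  · rw [hmaxx.2 h, max_eq_right h, ← sub_nonneg]
    calc 0 ≤ (deriv v x - deriv u x) ^ 2 + 2 * ((c - V x) * (v x * (v x - u x))) +
            V x * (v x - u x) ^ 2 := by
          have hVx : 0 ≤ V x := h0x
          have hcross : 0 ≤ (c - V x) * (v x * (v x - u x)) :=
            mul_nonneg (sub_nonneg.2 hcx) (mul_nonneg (hv0 x) (sub_nonneg.2 h))
          positivity
      _ = _ := by ring

lemma IV_max_expDecay_le {k b : ℝ} (hV : MemLp V ⊤ volume) (h0 : 0 ≤ᵐ[volume] V) (hk : 0 < k)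
    (hVk : ∀ᵐ x, V x ≤ k ^ 2) (hu : IsH1 u) (hub : 1 ≤ u b) :
    IV V (fun x => max (u x) (expDecay k b x)) ≤ IV V u := by
  have he := isH1_expDecay hk b
  have hle := IV_max_le_add_two_mul_integral hV h0 hVk hu he fun x => (expDecay_pos k b x).le
  rwa [integral_deriv_expDecay_mul_deriv_add hk b ((hu.max he).sub hu), expDecay_self,
    max_eq_left hub, sub_self, mul_zero, mul_zero, add_zero] at hle

end Energy

lemma supNorm_eq_of_forall_abs_le {u : ℝ → ℝ} {a : ℝ} (h : ∀ x, |u x| ≤ |u a|) :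
    supNorm u = |u a| :=
  le_antisymm (ciSup_le h) (le_ciSup (f := fun x => |u x|) ⟨|u a|, Set.forall_mem_range.2 h⟩ a)

lemma IsH1.abs_le_supNorm {u : ℝ → ℝ} (hu : IsH1 u) (x : ℝ) : |u x| ≤ supNorm u := by
  obtain ⟨a, ha⟩ := hu.exists_forall_abs_le
  exact (ha x).trans_eq (supNorm_eq_of_forall_abs_le ha).symm

namespace InKa

variable {a b : ℝ} {u v : ℝ → ℝ}

lemma of_forall_abs_le_one (hu : IsH1 u) (ha : u a = 1) (hle : ∀ x, |u x| ≤ 1) : InKa a u := by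
  have habs : |u a| = 1 := by rw [ha, abs_one]
  exact ⟨hu, ha, (supNorm_eq_of_forall_abs_le (by rwa [habs])).trans habs⟩

lemma abs_le_one (hu : InKa a u) (x : ℝ) : |u x| ≤ 1 :=
  (hu.1.abs_le_supNorm x).trans_eq hu.2.2

lemma max (hu : InKa a u) (hv : InKa a v) : InKa a fun x => max (u x) (v x) :=
  of_forall_abs_le_one (hu.1.max hv.1) (by simp only [hu.2.1, hv.2.1, max_self]) fun x =>
    abs_max_le_max_abs_abs.trans (max_le (hu.abs_le_one x) (hv.abs_le_one x))

lemma comp_add_right (hu : InKa b u) (h : ℝ) : InKa (b - h) fun x => u (x + h) :=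
  of_forall_abs_le_one (hu.1.comp_add_right h) (by simp only [sub_add_cancel, hu.2.1])
    fun x => hu.abs_le_one (x + h)

end InKa

lemma inKa_expDecay {k : ℝ} (hk : 0 < k) (b : ℝ) : InKa b (expDecay k b) :=
  .of_forall_abs_le_one (isH1_expDecay hk b) (expDecay_self k b) fun x => by
    rw [abs_of_pos (expDecay_pos k b x)]
    exact expDecay_le_one hk.le b x

lemma IsH1.exists_inKa_inv_mul {u : ℝ → ℝ} (hu : IsH1 u) (hne : u ≠ 0) :
    ∃ a, supNorm u = |u a| ∧ InKa a fun x => (u a)⁻¹ * u x := by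
  obtain ⟨a, ha⟩ := hu.exists_forall_abs_le
  obtain ⟨y, hy⟩ := Function.ne_iff.1 hne
  have hpos : 0 < |u a| := (abs_pos.2 hy).trans_le (ha y)
  refine ⟨a, supNorm_eq_of_forall_abs_le ha, .of_forall_abs_le_one (hu.const_mul _)
    (inv_mul_cancel₀ (abs_pos.1 hpos)) fun x => ?_⟩
  rw [abs_mul, abs_inv, inv_mul_le_one₀ hpos]
  exact ha x

section Infima

variable {V : ℝ → ℝ}

lemma FV_le_IV (h0 : 0 ≤ᵐ[volume] V) {a : ℝ} {u : ℝ → ℝ} (hu : InKa a u) : FV V a ≤ IV V u :=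
  csInf_le ⟨0, by rintro _ ⟨v, _, rfl⟩; exact IV_nonneg h0 v⟩ ⟨u, hu, rfl⟩

lemma le_FV {a c : ℝ} (h : ∀ u, InKa a u → c ≤ IV V u) : c ≤ FV V a :=
  le_csInf ⟨_, _, inKa_expDecay one_pos a, rfl⟩ (by rintro _ ⟨u, hu, rfl⟩; exact h u hu)

lemma FV_add_integral_le_FV {k h b : ℝ} (hV : MemLp V ⊤ volume) (h0 : 0 ≤ᵐ[volume] V)
    (hle : (fun x => V (x - h)) ≤ᵐ[volume] V) (hk : 0 < k) (hVk : ∀ᵐ x, V x ≤ k ^ 2) :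
    FV V (b - h) + ∫ x, (V x - V (x - h)) * expDecay k b x ^ 2 ≤ FV V b := by
  refine le_FV fun u hu => ?_
  set w : ℝ → ℝ := fun x => max (u x) (expDecay k b x)
  have hw : InKa b w := hu.max (inKa_expDecay hk b)
  have hVshift : MemLp (fun x => V (x - h)) ⊤ volume :=
    hV.comp_measurePreserving (measurePreserving_sub_right volume h)
  have hwe (x : ℝ) : |expDecay k b x| ≤ |w x| :=
    abs_le_abs_of_nonneg (expDecay_pos k b x).le (le_max_right _ _)
  calc FV V (b - h) + ∫ x, (V x - V (x - h)) * expDecay k b x ^ 2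
      ≤ IV V (fun x => w (x + h)) + ∫ x, (V x - V (x - h)) * expDecay k b x ^ 2 :=
        add_le_add_left (FV_le_IV h0 (hw.comp_add_right h)) _
    _ = IV (fun x => V (x - h)) w + ∫ x, (V x - V (x - h)) * expDecay k b x ^ 2 := by
        rw [IV_comp_add_right]
    _ ≤ IV V w := IV_add_integral_le hVshift hV hle hw.1 hwe
    _ ≤ IV V u := IV_max_expDecay_le hV h0 hk hVk hu.1 hu.2.1.ge

lemma integral_sub_mul_expDecay_sq_pos {V₁ V₂ : ℝ → ℝ} {k : ℝ} (hV₁ : MemLp V₁ ⊤ volume)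
    (hV₂ : MemLp V₂ ⊤ volume) (hle : V₁ ≤ᵐ[volume] V₂) (hne : ¬ V₁ =ᵐ[volume] V₂) (hk : 0 < k)
    (b : ℝ) : 0 < ∫ x, (V₂ x - V₁ x) * expDecay k b x ^ 2 := by
  have hnonneg : 0 ≤ᵐ[volume] fun x => (V₂ x - V₁ x) * expDecay k b x ^ 2 := by
    filter_upwards [hle] with x hx
    exact mul_nonneg (sub_nonneg.2 hx) (sq_nonneg _)
  have hint : Integrable fun x => (V₂ x - V₁ x) * expDecay k b x ^ 2 :=
    (memLp_two_expDecay hk b).integrable_sq.mul_of_top_right (hV₂.sub hV₁)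
  refine (integral_nonneg_of_ae hnonneg).lt_of_ne' fun hzero => hne ?_
  filter_upwards [(integral_eq_zero_iff_of_nonneg_ae hnonneg hint).1 hzero] with x hx
  have hsub := (mul_eq_zero.1 hx).resolve_right (pow_ne_zero 2 (expDecay_pos k b x).ne')
  exact (sub_eq_zero.1 hsub).symm

lemma FV_sub_lt_FV {h : ℝ} (hV : MemLp V ⊤ volume) (h0 : 0 ≤ᵐ[volume] V)
    (hle : (fun x => V (x - h)) ≤ᵐ[volume] V) (hne : ¬ (fun x => V (x - h)) =ᵐ[volume] V)
    (b : ℝ) : FV V (b - h) < FV V b := by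
  set k : ℝ := lpNorm V ⊤ volume + 1
  have hk : 1 ≤ k := le_add_of_nonneg_left lpNorm_nonneg
  have hVk : ∀ᵐ x, V x ≤ k ^ 2 := by
    filter_upwards [ae_le_lpNorm_exponent_top hV] with x hx
    calc V x ≤ k := (le_abs_self _).trans (hx.trans (le_add_of_nonneg_right zero_le_one))
      _ ≤ k ^ 2 := le_self_pow₀ hk two_ne_zero
  have hVshift : MemLp (fun x => V (x - h)) ⊤ volume :=
    hV.comp_measurePreserving (measurePreserving_sub_right volume h)
  have hkpos : 0 < k := one_pos.trans_le hk
  have hgap := integral_sub_mul_expDecay_sq_pos hVshift hV hle hne hkpos b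
  exact (lt_add_of_pos_right _ hgap).trans_le (FV_add_integral_le_FV hV h0 hle hkpos hVk)

lemma mV_le_FV (h0 : 0 ≤ᵐ[volume] V) (a : ℝ) : mV V ≤ FV V a := by
  refine le_FV fun u hu => csInf_le ⟨0, ?_⟩ ⟨u, hu.1, ?_, ?_⟩
  · rintro _ ⟨v, _, _, rfl⟩
    exact div_nonneg (IV_nonneg h0 v) (sq_nonneg _)
  · exact Function.ne_iff.2 ⟨a, hu.2.1.trans_ne one_ne_zero⟩
  · rw [hu.2.2, one_pow, div_one]

lemma exists_FV_le_IV_div_supNorm_sq (h0 : 0 ≤ᵐ[volume] V) {u : ℝ → ℝ} (hu : IsH1 u)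
    (hne : u ≠ 0) : ∃ a, FV V a ≤ IV V u / supNorm u ^ 2 := by
  obtain ⟨a, hsup, hK⟩ := hu.exists_inKa_inv_mul hne
  refine ⟨a, (FV_le_IV h0 hK).trans_eq ?_⟩
  rw [IV_const_mul, hsup, sq_abs, inv_pow, inv_mul_eq_div]

end Infima

section Monotone

lemma periodic_half_of_monotone_of_sub_ae_eq {f : ℝ → ℝ} {h : ℝ} (hf : Monotone f) (hh : 0 < h)
    (heq : (fun x => f (x - h)) =ᵐ[volume] f) : Function.Periodic f (h / 2) := by
  intro x
  obtain ⟨y, hy, hxy, hyx⟩ :=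
    (Measure.dense_of_ae heq).exists_between (show x + h / 2 < x + h by linarith)
  refine le_antisymm ?_ (hf (by linarith))
  calc f (x + h / 2) ≤ f y := hf hxy.le
    _ = f (y - h) := hy.symm
    _ ≤ f x := hf (by linarith)

lemma eq_of_monotone_of_periodic {α β : Type*} [AddCommGroup α] [LinearOrder α]
    [IsOrderedAddMonoid α] [Archimedean α] [PartialOrder β] {f : α → β} {c : α}
    (hf : Monotone f) (hc : 0 < c) (hper : Function.Periodic f c) (x y : α) : f x = f y := by
  have hle (x y : α) : f x ≤ f y := by
    obtain ⟨n, hn⟩ := Archimedean.arch (x - y) hc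
    rw [← hper.sub_nsmul_eq n]
    exact hf (sub_le_comm.1 hn)
  exact le_antisymm (hle x y) (hle y x)

lemma not_sub_ae_eq_of_monotone {f : ℝ → ℝ} {h : ℝ} (hf : Monotone f) (hh : 0 < h)
    (hne : ∃ x y, f x ≠ f y) : ¬ (fun x => f (x - h)) =ᵐ[volume] f := by
  intro heq
  obtain ⟨x, y, hxy⟩ := hne
  exact hxy (eq_of_monotone_of_periodic hf (half_pos hh)
    (periodic_half_of_monotone_of_sub_ae_eq hf hh heq) x y)

end Monotone

lemma ae_essInf_le_of_memLp_top {α : Type*} [MeasurableSpace α] {μ : Measure α} {f : α → ℝ}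
    (hf : MemLp f ⊤ μ) : ∀ᵐ x ∂μ, essInf f μ ≤ f x :=
  ae_essInf_le (isBoundedUnder_of_eventually_ge
    ((ae_le_lpNorm_exponent_top hf).mono fun _ hx => (abs_le.1 hx).1))

lemma exists_ne_of_essInf_ne_essSup {α : Type*} [MeasurableSpace α] {μ : Measure α} [NeZero μ]
    {f : α → ℝ} (h : essInf f μ ≠ essSup f μ) : ∃ x y, f x ≠ f y := by
  contrapose! h
  obtain ⟨x⟩ := μ.nonempty_of_neZero
  rw [funext fun y => h y x, essInf_const', essSup_const']

theorem strictMono_F_and_not_attained_general (V : ℝ → ℝ) (hV : MemLp V ⊤ (volume : Measure ℝ))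
    (hmono : Monotone V) (hnonneg : 0 ≤ᵐ[volume] V) (hne : ∃ x y, V x ≠ V y) :
    StrictMono (fun a : ℝ => FV V a) ∧
      ∀ u : ℝ → ℝ, IsH1 u → u ≠ 0 → IV V u / (supNorm u) ^ 2 ≠ mV V := by
  have hstrict : StrictMono (FV V) := fun a b hab => by
    have hh : 0 < b - a := sub_pos.2 hab
    have hle : (fun x => V (x - (b - a))) ≤ᵐ[volume] V :=
      .of_forall fun x => hmono (sub_le_self x hh.le)
    simpa only [sub_sub_cancel] using
      FV_sub_lt_FV hV hnonneg hle (not_sub_ae_eq_of_monotone hmono hh hne) b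
  refine ⟨hstrict, fun u hu hu0 hattained => ?_⟩
  obtain ⟨a, ha⟩ := exists_FV_le_IV_div_supNorm_sq hnonneg hu hu0
  have hlt : mV V < FV V a := (mV_le_FV hnonneg (a - 1)).trans_lt (hstrict (sub_one_lt a))
  exact (ha.trans_eq hattained).not_gt hlt

/-- **Strictly increasing `F` and non-attainment for non-constant non-decreasing potentials.**
If `V ∈ L^∞(ℝ)` is non-decreasing with `0 < v₀ := ess inf V < v₁ := ess sup V`, then
`a ↦ F(a;V)` is strictly increasing and the infimum `m(V)` is not attained. -/
theorem strictMono_F_and_not_attained (V : ℝ → ℝ) (hV : MemLp V ⊤ (volume : Measure ℝ))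
    (hmono : Monotone V) (hpos : 0 < essInf V (volume : Measure ℝ))
    (hlt : essInf V (volume : Measure ℝ) < essSup V (volume : Measure ℝ)) :
    StrictMono (fun a : ℝ => FV V a) ∧
      ∀ u : ℝ → ℝ, IsH1 u → u ≠ 0 → IV V u / (supNorm u) ^ 2 ≠ mV V := by
  exact strictMono_F_and_not_attained_general V hV hmono
    ((ae_essInf_le_of_memLp_top hV).mono fun _ => hpos.le.trans)
    (exists_ne_of_essInf_ne_essSup hlt.ne)
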